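/- arXiv:1110.6930 — 9 statements merged into one kernel-verified Lean document; each statement's English description precedes it below -/
import Mathlib

section
/- Let M be an invertible m×m matrix over A. Then det(M) • Σ_{u,v=1}^m (M⁻¹)_{u,v} • d(M_{v,u}) = d(det M) in Ω_{A|k}. -/
theorem der_prod_aux {k A : Type*} [CommRing k] [CommRing A] [Algebra k A] {ι : Type*}
    [DecidableEq ι] (s : Finset ι) (f : ι → A) :
    (KaehlerDifferential.D k A) (∏ i ∈ s, f i) =
      ∑ i ∈ s, (∏ j ∈ s.erase i, f j) • (KaehlerDifferential.D k A) (f i) := by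
  induction s using Finset.induction_on with
  | empty => simp
  | insert a s ha ih =>
    rw [Finset.prod_insert ha, Derivation.leibniz, ih, Finset.sum_insert ha,
      Finset.erase_insert ha, add_comm, Finset.smul_sum]
    congr 1
    refine Finset.sum_congr rfl fun i hi => ?_
    have hne : a ≠ i := fun h => ha (h ▸ hi)
    rw [Finset.erase_insert_of_ne hne, Finset.prod_insert (by simp [ha]), smul_smul]

theorem adj_aux {A : Type*} [CommRing A] {m : ℕ} (M : Matrix (Fin m) (Fin m) A) (u v : Fin m) :
    M.adjugate u v = ∑ σ : Equiv.Perm (Fin m), if σ u = v then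
      ((Equiv.Perm.sign σ : ℤ) : A) * ∏ j ∈ Finset.univ.erase u, M (σ j) j else 0 := by
  have h : M.adjugate u v = (M.updateCol u (Pi.single v 1)).det := by
    rw [← Matrix.cramer_apply, Matrix.cramer_eq_adjugate_mulVec]
    simp
  rw [h, Matrix.det_apply']
  refine Finset.sum_congr rfl fun σ _ => ?_
  rw [← Finset.mul_prod_erase _ _ (Finset.mem_univ u), Matrix.updateCol_self]
  have : ∏ j ∈ Finset.univ.erase u, M.updateCol u (Pi.single v 1) (σ j) j =
      ∏ j ∈ Finset.univ.erase u, M (σ j) j :=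
    Finset.prod_congr rfl fun j hj => by
      rw [Matrix.updateCol_ne (Finset.ne_of_mem_erase hj)]
  rw [this]
  by_cases hv : σ u = v
  · simp [hv]
  · simp [hv, Pi.single_apply]

/-- For an invertible `m × m` matrix `M` over a commutative `k`-algebra `A`, one has
`det M • ∑_{u,v} (M⁻¹)_{u,v} • d (M_{v,u}) = d (det M)` in `Ω_{A|k}`. -/
theorem statement1 {k A : Type*} [CommRing k] [CommRing A] [Algebra k A]
    {m : ℕ} (M : Matrix (Fin m) (Fin m) A) (hM : IsUnit M.det) :
    M.det • ∑ u : Fin m, ∑ v : Fin m,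
        M⁻¹ u v • (KaehlerDifferential.D k A) (M v u) =
      (KaehlerDifferential.D k A) M.det := by
  have h1 : ∀ u v, M.det * M⁻¹ u v = M.adjugate u v := fun u v => by
    rw [Matrix.inv_def, Matrix.smul_apply, smul_eq_mul, ← mul_assoc,
      Ring.mul_inverse_cancel _ hM, one_mul]
  simp only [Finset.smul_sum, smul_smul, h1]
  rw [Matrix.det_apply', map_sum]
  simp only [Derivation.leibniz, Derivation.map_intCast, smul_zero, add_zero, der_prod_aux,
    Finset.smul_sum, smul_smul]
  rw [Finset.sum_comm (s := (Finset.univ : Finset (Equiv.Perm (Fin m))))]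
  refine Finset.sum_congr rfl fun u _ => ?_
  simp only [adj_aux, Finset.sum_smul]
  rw [Finset.sum_comm]
  refine Finset.sum_congr rfl fun σ _ => ?_
  simp [ite_smul]
end

section
/- Let J ⊆ A be an ideal and let M, N be m×m matrices over A such that every entry of N·M − 1 lies in J (1 the identity matrix). Then Σ_{u,v=1}^m N_{u,v} • d(M_{v,u}) − det(N) • d(det M) lies in J·Ω_{A|k}. -/
theorem leibniz_prod_aux {k A Ω ι : Type*} [CommRing k] [CommRing A] [Algebra k A]
    [AddCommGroup Ω] [Module A Ω] [Module k Ω] [DecidableEq ι]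
    (D : Derivation k A Ω) (s : Finset ι) (f : ι → A) :
    D (∏ i ∈ s, f i) = ∑ i ∈ s, (∏ j ∈ s.erase i, f j) • D (f i) := by
  induction s using Finset.induction_on with
  | empty => simp
  | insert a s ha ih =>
    rw [Finset.prod_insert ha, Derivation.leibniz, ih, Finset.sum_insert ha,
      Finset.erase_insert ha, Finset.smul_sum, add_comm]
    congr 1
    refine Finset.sum_congr rfl fun i hi => ?_
    have hne : a ≠ i := fun e => ha (e ▸ hi)
    rw [Finset.erase_insert_of_ne hne, Finset.prod_insert (by simp [ha]), smul_smul]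

theorem adjugate_aux {A : Type*} [CommRing A] {m : ℕ} (M : Matrix (Fin m) (Fin m) A)
    (i v : Fin m) :
    M.adjugate i v = ∑ σ : Equiv.Perm (Fin m),
      if σ i = v then Equiv.Perm.sign σ • ∏ j ∈ Finset.univ.erase i, M (σ j) j else 0 := by
  have h1 : M.adjugate i v = (M.updateCol i (Pi.single v 1)).det := by
    rw [← Matrix.transpose_apply M.adjugate, Matrix.adjugate_transpose, Matrix.adjugate_apply,
      Matrix.updateRow_transpose, Matrix.det_transpose]
  rw [h1, Matrix.det_apply]
  refine Finset.sum_congr rfl fun σ _ => ?_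
  rw [← Finset.mul_prod_erase Finset.univ _ (Finset.mem_univ i)]
  have h2 : ∏ j ∈ Finset.univ.erase i, M.updateCol i (Pi.single v 1) (σ j) j
      = ∏ j ∈ Finset.univ.erase i, M (σ j) j := by
    refine Finset.prod_congr rfl fun j hj => ?_
    rw [Matrix.updateCol_ne (Finset.ne_of_mem_erase hj)]
  rw [h2, Matrix.updateCol_self, Pi.single_apply]
  split_ifs <;> simp

theorem jacobi_aux {k A Ω : Type*} [CommRing k] [CommRing A] [Algebra k A]
    [AddCommGroup Ω] [Module A Ω] [Module k Ω]
    (D : Derivation k A Ω) {m : ℕ} (M : Matrix (Fin m) (Fin m) A) :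
    D M.det = ∑ u, ∑ v, M.adjugate u v • D (M v u) := by
  have h1 : ∀ u, ∑ v, M.adjugate u v • D (M v u) = ∑ σ : Equiv.Perm (Fin m),
      (Equiv.Perm.sign σ • ∏ j ∈ Finset.univ.erase u, M (σ j) j) • D (M (σ u) u) := by
    intro u
    simp_rw [adjugate_aux, Finset.sum_smul]
    rw [Finset.sum_comm]
    refine Finset.sum_congr rfl fun σ _ => ?_
    simp [ite_smul]
  simp_rw [h1]
  rw [Finset.sum_comm, Matrix.det_apply, map_sum]
  refine Finset.sum_congr rfl fun σ _ => ?_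
  rcases Int.units_eq_one_or (Equiv.Perm.sign σ) with h | h <;>
    simp [h, leibniz_prod_aux, Units.smul_def]

theorem adj_mem_aux {A : Type*} [CommRing A] (J : Ideal A) {m : ℕ}
    (M N : Matrix (Fin m) (Fin m) A) (h : ∀ u v : Fin m, (N * M - 1) u v ∈ J) (u v : Fin m) :
    N u v - N.det * M.adjugate u v ∈ J := by
  let q := Ideal.Quotient.mk J
  have h1 : N.map q * M.map q = 1 := by
    rw [← Matrix.map_mul]
    ext a b
    have := Ideal.Quotient.eq_zero_iff_mem.mpr (h a b)
    rw [Matrix.sub_apply, map_sub, sub_eq_zero] at this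
    rw [Matrix.map_apply, this, Matrix.one_apply, Matrix.one_apply]
    split_ifs <;> simp
  have h2 : (N.map q).det * (M.map q).det = 1 := by rw [← Matrix.det_mul, h1, Matrix.det_one]
  have h3 : N.map q = (N.map q).det • (M.map q).adjugate := by
    calc N.map q = ((N.map q).det * (M.map q).det) • N.map q := by rw [h2, one_smul]
      _ = (N.map q).det • (N.map q * (M.map q * (M.map q).adjugate)) := by
        rw [Matrix.mul_adjugate, Matrix.mul_smul, mul_one, smul_smul]
      _ = _ := by rw [← mul_assoc, h1, one_mul]
  rw [← Ideal.Quotient.eq_zero_iff_mem, map_sub, map_mul, sub_eq_zero]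
  have h4 := congrFun (congrFun h3 u) v
  have h5 : (N.map q).det = q N.det := (RingHom.map_det q N).symm
  have h6 : (M.map q).adjugate = M.adjugate.map q := (RingHom.map_adjugate q M).symm
  rw [h5, h6] at h4
  simpa using h4

/-- Let `J ⊆ A` be an ideal and `M, N` be `m × m` matrices over `A` such that every entry of
`N * M - 1` lies in `J`.  Then `∑_{u,v} N_{u,v} • d (M_{v,u}) - det N • d (det M)` lies in
`J · Ω_{A|k}`. -/
theorem statement2 {k A : Type*} [CommRing k] [CommRing A] [Algebra k A]
    (J : Ideal A) {m : ℕ} (M N : Matrix (Fin m) (Fin m) A)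
    (h : ∀ u v : Fin m, (N * M - 1) u v ∈ J) :
    (∑ u : Fin m, ∑ v : Fin m, N u v • (KaehlerDifferential.D k A) (M v u)) -
        N.det • (KaehlerDifferential.D k A) M.det ∈
      J • (⊤ : Submodule A (KaehlerDifferential k A)) := by
  rw [jacobi_aux, Finset.smul_sum, ← Finset.sum_sub_distrib]
  refine Submodule.sum_mem _ fun u _ => ?_
  rw [Finset.smul_sum, ← Finset.sum_sub_distrib]
  refine Submodule.sum_mem _ fun v _ => ?_
  rw [smul_smul, ← sub_smul]
  exact Submodule.smul_mem_smul (adj_mem_aux J M N h u v) Submodule.mem_top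
end

section
/- Let A be a commutative ring, J ⊆ A an ideal, and P, Q, R, S m×m matrices over A such that every entry of Q·R − S lies in J and every entry of P·S − 1 lies in J. Then tr(P·(Q·R − S)) − det(P)·(det(Q)·det(R) − det(S)) ∈ J². -/
theorem prod_one_add_aux {A ι : Type*} [CommRing A] (J : Ideal A) (s : Finset ι) (a : ι → A)
    (h : ∀ i, a i ∈ J) : ∏ i ∈ s, (1 + a i) - 1 - ∑ i ∈ s, a i ∈ J ^ 2 := by
  classical
  induction s using Finset.induction_on with
  | empty => simp
  | insert i s hi ih =>
    rw [Finset.prod_insert hi, Finset.sum_insert hi]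
    have e : (1 + a i) * ∏ j ∈ s, (1 + a j) - 1 - (a i + ∑ j ∈ s, a j)
        = (1 + a i) * (∏ j ∈ s, (1 + a j) - 1 - ∑ j ∈ s, a j) + a i * ∑ j ∈ s, a j := by ring
    rw [e]
    refine Ideal.add_mem _ (Ideal.mul_mem_left _ _ ih) ?_
    rw [pow_two]
    exact Ideal.mul_mem_mul (h i) (Ideal.sum_mem _ fun j _ => h j)

theorem det_one_add_aux {A : Type*} [CommRing A] (J : Ideal A) {m : ℕ}
    (N : Matrix (Fin m) (Fin m) A) (h : ∀ u v, N u v ∈ J) :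
    (1 + N).det - 1 - N.trace ∈ J ^ 2 := by
  rw [Matrix.det_apply', ← Finset.add_sum_erase _ _ (Finset.mem_univ (1 : Equiv.Perm (Fin m)))]
  have key := prod_one_add_aux J Finset.univ (fun i => N i i) (fun i => h i i)
  have hs : ∑ σ ∈ Finset.univ.erase (1 : Equiv.Perm (Fin m)),
      ((Equiv.Perm.sign σ : ℤ) : A) * ∏ i, (1 + N) (σ i) i ∈ J ^ 2 := by
    refine Ideal.sum_mem _ fun σ hσ => Ideal.mul_mem_left _ _ ?_
    obtain ⟨i, hi⟩ : ∃ i, σ i ≠ i := by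
      by_contra! hc
      exact Finset.ne_of_mem_erase hσ (Equiv.ext hc)
    have hj : σ (σ i) ≠ σ i := fun hc => hi (σ.injective hc)
    have hm : ∀ k, σ k ≠ k → (1 + N) (σ k) k ∈ J := fun k hk => by
      rw [Matrix.add_apply, Matrix.one_apply_ne hk, zero_add]; exact h _ _
    rw [← Finset.mul_prod_erase _ _ (Finset.mem_univ i),
      ← Finset.mul_prod_erase _ _ (Finset.mem_erase.2 ⟨hi, Finset.mem_univ (σ i)⟩),
      ← mul_assoc, pow_two]
    exact Ideal.mul_mem_right _ _ (Ideal.mul_mem_mul (hm _ hi) (hm _ hj))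
  have := Ideal.add_mem _ key hs
  convert this using 1
  simp [Matrix.trace]
  ring

/-- Let `A` be a commutative ring, `J ⊆ A` an ideal, and `P, Q, R, S` be `m × m` matrices over
`A` such that every entry of `Q * R - S` lies in `J` and every entry of `P * S - 1` lies in `J`.
Then `tr (P * (Q * R - S)) - det P * (det Q * det R - det S) ∈ J ^ 2`. -/
theorem statement4 {A : Type*} [CommRing A] (J : Ideal A) {m : ℕ}
    (P Q R S : Matrix (Fin m) (Fin m) A)
    (h1 : ∀ u v : Fin m, (Q * R - S) u v ∈ J)
    (h2 : ∀ u v : Fin m, (P * S - 1) u v ∈ J) :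
    (P * (Q * R - S)).trace - P.det * (Q.det * R.det - S.det) ∈ J ^ 2 := by
  have hX := det_one_add_aux J (P * S - 1) h2
  have hY := det_one_add_aux J ((P * S - 1) + P * (Q * R - S)) (fun u v => by
    rw [Matrix.add_apply]
    refine Ideal.add_mem _ (h2 u v) ?_
    rw [Matrix.mul_apply]
    exact Ideal.sum_mem _ fun k _ => Ideal.mul_mem_left _ _ (h1 k v))
  have e1 : 1 + (P * S - 1) = P * S := by abel
  have e2 : 1 + ((P * S - 1) + P * (Q * R - S)) = P * (Q * R) := by
    rw [Matrix.mul_sub]; abel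
  rw [e1, Matrix.det_mul] at hX
  rw [e2, Matrix.det_mul, Matrix.det_mul, Matrix.trace_add] at hY
  have := Ideal.sub_mem _ hX hY
  convert this using 1
  ring
end

section
/- Let A be a commutative ring, J ⊆ A an ideal, and p, q, r, s, p', q', r', s' ∈ A with qr − s ∈ J, q'r' − s' ∈ J, ps − 1 ∈ J, and p's' − 1 ∈ J. Then p(qr − s) + p'(q'r' − s') − pp'(qq'rr' − ss') ∈ J²; indeed this element equals (ps − 1)(p's' − 1) − (pqr − 1)(p'q'r' − 1). -/
/-- Let `A` be a commutative ring, `J ⊆ A` an ideal, and `p, q, r, s, p', q', r', s' ∈ A` with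
`q r - s ∈ J`, `q' r' - s' ∈ J`, `p s - 1 ∈ J` and `p' s' - 1 ∈ J`.  Then
`p (q r - s) + p' (q' r' - s') - p p' (q q' r r' - s s') ∈ J ^ 2`; indeed this element equals
`(p s - 1)(p' s' - 1) - (p q r - 1)(p' q' r' - 1)`. -/
theorem statement5 {A : Type*} [CommRing A] (J : Ideal A) (p q r s p' q' r' s' : A)
    (h1 : q * r - s ∈ J) (h2 : q' * r' - s' ∈ J)
    (h3 : p * s - 1 ∈ J) (h4 : p' * s' - 1 ∈ J) :
    p * (q * r - s) + p' * (q' * r' - s') - p * p' * (q * q' * r * r' - s * s') ∈ J ^ 2 ∧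
    p * (q * r - s) + p' * (q' * r' - s') - p * p' * (q * q' * r * r' - s * s') =
      (p * s - 1) * (p' * s' - 1) - (p * q * r - 1) * (p' * q' * r' - 1) := by
  have key : p * (q * r - s) + p' * (q' * r' - s') - p * p' * (q * q' * r * r' - s * s') =
      (p * s - 1) * (p' * s' - 1) - (p * q * r - 1) * (p' * q' * r' - 1) := by ring
  refine ⟨?_, key⟩
  have h5 : p * q * r - 1 ∈ J := by
    have e : p * q * r - 1 = p * (q * r - s) + (p * s - 1) := by ring
    rw [e]
    exact J.add_mem (J.mul_mem_left p h1) h3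
  have h6 : p' * q' * r' - 1 ∈ J := by
    have e : p' * q' * r' - 1 = p' * (q' * r' - s') + (p' * s' - 1) := by ring
    rw [e]
    exact J.add_mem (J.mul_mem_left p' h2) h4
  rw [key, pow_two]
  exact (J * J).sub_mem (Ideal.mul_mem_mul h3 h4) (Ideal.mul_mem_mul h5 h6)
end

section
/- Let J ⊆ A be an ideal and a, b, a', b' ∈ A with ab − 1 ∈ J and a'b' − 1 ∈ J. Then b • d(a) + b' • d(a') − bb' • d(aa') lies in J·Ω_{A|k}. -/
/-- Let `J ⊆ A` be an ideal and `a, b, a', b' ∈ A` with `a b - 1 ∈ J` and `a' b' - 1 ∈ J`.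
Then `b • d a + b' • d a' - (b b') • d (a a')` lies in `J · Ω_{A|k}`. -/
theorem statement6 {k A : Type*} [CommRing k] [CommRing A] [Algebra k A]
    (J : Ideal A) (a b a' b' : A) (h : a * b - 1 ∈ J) (h' : a' * b' - 1 ∈ J) :
    b • (KaehlerDifferential.D k A) a + b' • (KaehlerDifferential.D k A) a' -
        (b * b') • (KaehlerDifferential.D k A) (a * a') ∈
      J • (⊤ : Submodule A (KaehlerDifferential k A)) := by
  have e : b • (KaehlerDifferential.D k A) a + b' • (KaehlerDifferential.D k A) a' -
        (b * b') • (KaehlerDifferential.D k A) (a * a') =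
      -((a' * b' - 1) • (b • (KaehlerDifferential.D k A) a) +
        (a * b - 1) • (b' • (KaehlerDifferential.D k A) a')) := by
    rw [Derivation.leibniz]
    module
  rw [e]
  exact neg_mem (add_mem (Submodule.smul_mem_smul h' Submodule.mem_top)
    (Submodule.smul_mem_smul h Submodule.mem_top))
end

section
/- Let k be a commutative ring, A a smooth commutative k-algebra, J ⊆ A an ideal, and B := A/J, and assume B is flat as a k-module. Let I ⊆ A ⊗_k A be the kernel of the multiplication map A ⊗_k A → A. Then the sequence 0 → J/J² →^β I ⊗_{A⊗_k A} (B ⊗_k B) →^α B ⊗_k B →^ε B → 0 is exact, where β sends the class of j ∈ J to (j⊗1 − 1⊗j) ⊗ 1 (in particular, β is well defined, i.e. the assignment j ↦ (j⊗1 − 1⊗j) ⊗ 1 kills J²), α is induced by the inclusion I ⊆ A ⊗_k A composed with the projection A ⊗_k A → B ⊗_k B (so α(x ⊗ m) = x̄·m where x̄ is the image of x in B ⊗_k B), and ε is the multiplication map b ⊗ b' ↦ bb'. -/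
open TensorProduct

section

universe u
variable (k A : Type u) [CommRing k] [CommRing A] [Algebra k A] (J : Ideal A)

/-- The `A ⊗[k] A`-algebra structure on `(A ⧸ J) ⊗[k] (A ⧸ J)` given by the tensor square of
the quotient map. -/
noncomputable instance quotTensorAlgebra :
    Algebra (A ⊗[k] A) ((A ⧸ J) ⊗[k] (A ⧸ J)) :=
  ((Algebra.TensorProduct.map (Ideal.Quotient.mkₐ k J) (Ideal.Quotient.mkₐ k J)).toRingHom).toAlgebra

/-- The map `β : J → I ⊗_{A ⊗ₖ A} (B ⊗ₖ B)`, `j ↦ (j ⊗ 1 - 1 ⊗ j) ⊗ 1`, where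
`I = ker (A ⊗ₖ A → A)` and `B = A ⧸ J`. -/
noncomputable def betaFun (j : J) :
    (KaehlerDifferential.ideal k A) ⊗[A ⊗[k] A] ((A ⧸ J) ⊗[k] (A ⧸ J)) :=
  (⟨(j : A) ⊗ₜ[k] (1 : A) - (1 : A) ⊗ₜ[k] (j : A), by simp [RingHom.mem_ker]⟩ :
      KaehlerDifferential.ideal k A) ⊗ₜ[A ⊗[k] A] (1 : (A ⧸ J) ⊗[k] (A ⧸ J))

/-- The map `α : I ⊗_{A ⊗ₖ A} (B ⊗ₖ B) → B ⊗ₖ B` induced by the inclusion `I ⊆ A ⊗ₖ A`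
composed with the projection `A ⊗ₖ A → B ⊗ₖ B`, so `α (x ⊗ m) = x̄ · m`. -/
noncomputable def alphaMap :
    (KaehlerDifferential.ideal k A) ⊗[A ⊗[k] A] ((A ⧸ J) ⊗[k] (A ⧸ J)) →ₗ[A ⊗[k] A]
      ((A ⧸ J) ⊗[k] (A ⧸ J)) :=
  TensorProduct.lift
    ((LinearMap.lsmul (A ⊗[k] A) ((A ⧸ J) ⊗[k] (A ⧸ J))).comp
      (KaehlerDifferential.ideal k A).subtype)

theorem tmul_one_eq_zero_iff_aux {R C M : Type*} [CommRing R] [CommRing C] [Algebra R C]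
    [AddCommGroup M] [Module R M] (h : Function.Surjective (algebraMap R C)) (m : M) :
    m ⊗ₜ[R] (1 : C) = 0 ↔ m ∈ (RingHom.ker (algebraMap R C)) • (⊤ : Submodule R M) := by
  let e : (R ⧸ RingHom.ker (algebraMap R C)) ≃ₐ[R] C :=
    Ideal.quotientKerAlgEquivOfSurjective (f := Algebra.ofId R C) h
  let e1 := (TensorProduct.congr (LinearEquiv.refl R M) e.symm.toLinearEquiv).trans
    (TensorProduct.tensorQuotEquivQuotSMul M (RingHom.ker (algebraMap R C)))
  have h1 : e1 (m ⊗ₜ[R] (1 : C)) = Submodule.Quotient.mk m := by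
    have : e.symm 1 = Ideal.Quotient.mk _ 1 := by simp
    simp only [e1, LinearEquiv.trans_apply, TensorProduct.congr_tmul, LinearEquiv.refl_apply,
      AlgEquiv.coe_toLinearEquiv, this, TensorProduct.tensorQuotEquivQuotSMul_tmul_mk, one_smul]
  rw [← e1.map_eq_zero_iff, h1, Submodule.Quotient.mk_eq_zero]

theorem mem_smul_top_iff_aux {R : Type*} [CommRing R] (K I : Ideal R) (x : I) :
    x ∈ K • (⊤ : Submodule R I) ↔ (x : R) ∈ K * I := by
  rw [Submodule.mem_smul_top_iff, smul_eq_mul]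

theorem algebraMap_quotTensor (x : A ⊗[k] A) :
    algebraMap (A ⊗[k] A) ((A ⧸ J) ⊗[k] (A ⧸ J)) x =
      Algebra.TensorProduct.map (Ideal.Quotient.mkₐ k J) (Ideal.Quotient.mkₐ k J) x := rfl

theorem algebraMap_quotTensor_surj :
    Function.Surjective (algebraMap (A ⊗[k] A) ((A ⧸ J) ⊗[k] (A ⧸ J))) :=
  TensorProduct.map_surjective (Ideal.Quotient.mkₐ_surjective k J)
    (Ideal.Quotient.mkₐ_surjective k J)

theorem ker_quotTensor :
    RingHom.ker (algebraMap (A ⊗[k] A) ((A ⧸ J) ⊗[k] (A ⧸ J))) =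
      J.map (Algebra.TensorProduct.includeLeft : A →ₐ[k] A ⊗[k] A) ⊔
      J.map (Algebra.TensorProduct.includeRight : A →ₐ[k] A ⊗[k] A) := by
  have := Algebra.TensorProduct.map_ker (Ideal.Quotient.mkₐ k J) (Ideal.Quotient.mkₐ k J)
    (Ideal.Quotient.mkₐ_surjective k J) (Ideal.Quotient.mkₐ_surjective k J)
  have hk : RingHom.ker (Ideal.Quotient.mkₐ k J) = J := Ideal.Quotient.mkₐ_ker k J
  rw [hk] at this
  exact this

theorem tmul_one_eq_zero_iff_mul (x : KaehlerDifferential.ideal k A) :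
    x ⊗ₜ[A ⊗[k] A] (1 : (A ⧸ J) ⊗[k] (A ⧸ J)) = 0 ↔
    (x : A ⊗[k] A) ∈ (J.map (Algebra.TensorProduct.includeLeft : A →ₐ[k] A ⊗[k] A) ⊔
      J.map (Algebra.TensorProduct.includeRight : A →ₐ[k] A ⊗[k] A)) *
        KaehlerDifferential.ideal k A := by
  rw [tmul_one_eq_zero_iff_aux (algebraMap_quotTensor_surj k A J), mem_smul_top_iff_aux,
    ker_quotTensor]

theorem mem_ideal_iff_aux (x : A ⊗[k] A) :
    x ∈ KaehlerDifferential.ideal k A ↔ Algebra.TensorProduct.lmul' (S := A) k x = 0 := Iff.rfl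

/-- Key step: elements of `K * I` come from elements of `J ⊗ B` that die in `J ⊗[A] B`. -/
theorem exists_lift_aux (x : A ⊗[k] A)
    (hx : x ∈ (J.map (Algebra.TensorProduct.includeLeft : A →ₐ[k] A ⊗[k] A) ⊔
      J.map (Algebra.TensorProduct.includeRight : A →ₐ[k] A ⊗[k] A)) *
        KaehlerDifferential.ideal k A) :
    ∃ t : J ⊗[k] (A ⧸ J),
      (LinearMap.rTensor (A ⧸ J) (J.subtype.restrictScalars k)) t =
        Algebra.TensorProduct.map (AlgHom.id k A) (Ideal.Quotient.mkₐ k J) x ∧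
      TensorProduct.mapOfCompatibleSMul A k A J (A ⧸ J) t = 0 := by
  induction hx using Submodule.mul_induction_on' with
  | add x hx y hy h1 h2 =>
    obtain ⟨t, ht, ht'⟩ := h1
    obtain ⟨s, hs, hs'⟩ := h2
    exact ⟨t + s, by rw [map_add, map_add, ht, hs], by rw [map_add, ht', hs', add_zero]⟩
  | mem_mul_mem x hx y hy =>
    rw [Ideal.map, Ideal.map, ← Ideal.span_union] at hx
    induction hx using Submodule.span_induction generalizing y with
    | zero => exact ⟨0, by simp, by simp⟩
    | add x1 x2 _ _ h1 h2 =>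
      obtain ⟨t, ht, ht'⟩ := h1 y hy
      obtain ⟨s, hs, hs'⟩ := h2 y hy
      exact ⟨t + s, by rw [map_add, ht, hs, add_mul, map_add],
        by rw [map_add, ht', hs', add_zero]⟩
    | smul r x1 _ h1 =>
      obtain ⟨t, ht, ht'⟩ := h1 (r * y) (Ideal.mul_mem_left _ _ hy)
      exact ⟨t, by rw [ht, smul_eq_mul]; congr 1; ring, ht'⟩
    | mem x1 h =>
      rcases h with ⟨j, hj, rfl⟩ | ⟨j, hj, rfl⟩
      · let l : A →ₗ[k] J := (LinearMap.toSpanSingleton A J ⟨j, hj⟩).restrictScalars k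
        refine ⟨LinearMap.rTensor (A ⧸ J) l
          (Algebra.TensorProduct.map (AlgHom.id k A) (Ideal.Quotient.mkₐ k J) y), ?_, ?_⟩
        · clear hy
          induction y with
          | zero => simp
          | add a b ha hb => rw [map_add, map_add, map_add, ha, hb, mul_add, map_add]
          | tmul a b => simp [l, mul_comm]
        · have key : ∀ y : A ⊗[k] A, TensorProduct.mapOfCompatibleSMul A k A J (A ⧸ J)
              (LinearMap.rTensor (A ⧸ J) l
                (Algebra.TensorProduct.map (AlgHom.id k A) (Ideal.Quotient.mkₐ k J) y)) =
              (⟨j, hj⟩ : J) ⊗ₜ[A]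
                (Ideal.Quotient.mk J (Algebra.TensorProduct.lmul' (S := A) k y)) := by
            intro y
            induction y with
            | zero => simp
            | add a b ha hb =>
              rw [map_add, map_add, map_add, ha, hb, map_add, map_add, TensorProduct.tmul_add]
            | tmul a b =>
              have h1 : l a = a • (⟨j, hj⟩ : J) := rfl
              have h2 : Ideal.Quotient.mk J (a * b) = a • Ideal.Quotient.mk J b := rfl
              simp only [Algebra.TensorProduct.map_tmul, AlgHom.coe_id, id_eq,
                Ideal.Quotient.mkₐ_eq_mk, LinearMap.rTensor_tmul,
                TensorProduct.mapOfCompatibleSMul_tmul, Algebra.TensorProduct.lmul'_apply_tmul]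
              rw [h1, h2, TensorProduct.smul_tmul]
          rw [key, (mem_ideal_iff_aux k A y).1 hy, map_zero, TensorProduct.tmul_zero]
      · refine ⟨0, ?_, by simp⟩
        rw [map_zero, map_mul]
        simp [Ideal.Quotient.eq_zero_iff_mem.2 (show j ∈ J from hj)]

theorem beta_inj_aux [Module.Flat k (A ⧸ J)] (j : J) (h : betaFun k A J j = 0) :
    (j : A) ∈ J ^ 2 := by
  rw [betaFun, tmul_one_eq_zero_iff_mul] at h
  obtain ⟨t, ht, ht'⟩ := exists_lift_aux k A J _ h
  have hinj : Function.Injective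
      (LinearMap.rTensor (A ⧸ J) (J.subtype.restrictScalars k)) :=
    Module.Flat.rTensor_preserves_injective_linearMap _ Subtype.val_injective
  have : t = j ⊗ₜ 1 := by
    apply hinj
    rw [ht]
    simp [Ideal.Quotient.eq_zero_iff_mem.2 j.2]
  rw [this, TensorProduct.mapOfCompatibleSMul_tmul,
    tmul_one_eq_zero_iff_aux Ideal.Quotient.mk_surjective, mem_smul_top_iff_aux] at ht'
  rw [pow_two]
  simpa using ht'

theorem beta_sq_aux (j : J) (h : (j : A) ∈ J ^ 2) : betaFun k A J j = 0 := by
  rw [betaFun, tmul_one_eq_zero_iff_mul]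
  obtain ⟨j, hj⟩ := j
  simp only at h ⊢
  clear hj
  rw [pow_two] at h
  have hd : ∀ a : A, a ⊗ₜ[k] (1 : A) - (1 : A) ⊗ₜ[k] a ∈ KaehlerDifferential.ideal k A := by
    intro a
    simp
  induction h using Submodule.mul_induction_on' with
  | mem_mul_mem a ha b hb =>
    have : (a * b) ⊗ₜ[k] (1 : A) - (1 : A) ⊗ₜ[k] (a * b) =
      (a ⊗ₜ[k] 1) * (b ⊗ₜ[k] (1 : A) - (1 : A) ⊗ₜ[k] b) +
        (1 ⊗ₜ[k] b) * (a ⊗ₜ[k] (1 : A) - (1 : A) ⊗ₜ[k] a) := by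
      simp [mul_sub, mul_comm b a]
    rw [this]
    exact add_mem
      (Ideal.mul_mem_mul (Ideal.mem_sup_left (Ideal.mem_map_of_mem
        (Algebra.TensorProduct.includeLeft : A →ₐ[k] A ⊗[k] A) ha)) (hd b))
      (Ideal.mul_mem_mul (Ideal.mem_sup_right (Ideal.mem_map_of_mem
        (Algebra.TensorProduct.includeRight : A →ₐ[k] A ⊗[k] A) hb)) (hd a))
  | add x hx y hy h1 h2 =>
    rw [TensorProduct.add_tmul, TensorProduct.tmul_add, add_sub_add_comm]
    exact add_mem h1 h2

/-- Given ring maps `s : A → R`, `m : R → A` with `m ∘ s = id`, an element `y` of `J R` is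
congruent modulo `(J R) * ker m` to `s (m y)`, and `m y ∈ J`. -/
theorem sub_section_mem_aux {A R : Type*} [CommRing A] [CommRing R] (s : A →+* R) (m : R →+* A)
    (hs : ∀ a, m (s a) = a) (J : Ideal A) (y : R) (hy : y ∈ J.map s) :
    m y ∈ J ∧ y - s (m y) ∈ J.map s * RingHom.ker m := by
  rw [Ideal.map] at hy
  induction hy using Submodule.span_induction with
  | zero => simp
  | add a b _ _ ha hb =>
    rw [map_add, map_add, add_sub_add_comm]
    exact ⟨add_mem ha.1 hb.1, add_mem ha.2 hb.2⟩
  | mem a h =>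
    obtain ⟨j, hj, rfl⟩ := h
    rw [hs]
    exact ⟨hj, by simp⟩
  | smul r a _ h =>
    rw [smul_eq_mul, map_mul, map_mul]
    refine ⟨Ideal.mul_mem_left _ _ h.1, ?_⟩
    have : r * a - s (m r) * s (m a) = r * (a - s (m a)) + s (m a) * (r - s (m r)) := by ring
    rw [this]
    refine add_mem (Ideal.mul_mem_left _ _ h.2)
      (Ideal.mul_mem_mul (Ideal.mem_map_of_mem s h.1) ?_)
    rw [RingHom.mem_ker, map_sub, hs, sub_self]

/-- Modulo `K * I`, an element of `K` is of the form `i ⊗ 1 + 1 ⊗ j`. -/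
theorem exists_rep_aux (x : A ⊗[k] A)
    (hx : x ∈ (J.map (Algebra.TensorProduct.includeLeft : A →ₐ[k] A ⊗[k] A) ⊔
      J.map (Algebra.TensorProduct.includeRight : A →ₐ[k] A ⊗[k] A))) :
    ∃ j ∈ J, ∃ j' ∈ J, x - (j ⊗ₜ[k] 1 + 1 ⊗ₜ[k] j') ∈
      (J.map (Algebra.TensorProduct.includeLeft : A →ₐ[k] A ⊗[k] A) ⊔
      J.map (Algebra.TensorProduct.includeRight : A →ₐ[k] A ⊗[k] A)) *
        KaehlerDifferential.ideal k A := by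
  obtain ⟨y, hy, z, hz, rfl⟩ := Submodule.mem_sup.1 hx
  have h1 : ∃ j ∈ J, y - j ⊗ₜ[k] 1 ∈
      (J.map (Algebra.TensorProduct.includeLeft : A →ₐ[k] A ⊗[k] A) ⊔
      J.map (Algebra.TensorProduct.includeRight : A →ₐ[k] A ⊗[k] A)) *
        KaehlerDifferential.ideal k A := by
    have := sub_section_mem_aux
      (Algebra.TensorProduct.includeLeft : A →ₐ[k] A ⊗[k] A).toRingHom
      (Algebra.TensorProduct.lmul' (S := A) k).toRingHom (fun a => by simp) J y hy
    exact ⟨_, this.1, Ideal.mul_mono_left le_sup_left this.2⟩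
  have h2 : ∃ j ∈ J, z - 1 ⊗ₜ[k] j ∈
      (J.map (Algebra.TensorProduct.includeLeft : A →ₐ[k] A ⊗[k] A) ⊔
      J.map (Algebra.TensorProduct.includeRight : A →ₐ[k] A ⊗[k] A)) *
        KaehlerDifferential.ideal k A := by
    have := sub_section_mem_aux
      (Algebra.TensorProduct.includeRight : A →ₐ[k] A ⊗[k] A).toRingHom
      (Algebra.TensorProduct.lmul' (S := A) k).toRingHom (fun a => by simp) J z hz
    exact ⟨_, this.1, Ideal.mul_mono_left le_sup_right this.2⟩
  obtain ⟨j, hj, h1⟩ := h1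
  obtain ⟨j', hj', h2⟩ := h2
  refine ⟨j, hj, j', hj', ?_⟩
  rw [add_sub_add_comm]
  exact add_mem h1 h2

theorem exists_tmul_one_aux (z : (KaehlerDifferential.ideal k A) ⊗[A ⊗[k] A]
    ((A ⧸ J) ⊗[k] (A ⧸ J))) :
    ∃ x : KaehlerDifferential.ideal k A, z = x ⊗ₜ[A ⊗[k] A] (1 : (A ⧸ J) ⊗[k] (A ⧸ J)) := by
  induction z with
  | zero => exact ⟨0, by simp⟩
  | add a b ha hb =>
    obtain ⟨x, rfl⟩ := ha
    obtain ⟨y, rfl⟩ := hb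
    exact ⟨x + y, by rw [TensorProduct.add_tmul]⟩
  | tmul x c =>
    obtain ⟨r, rfl⟩ := algebraMap_quotTensor_surj k A J c
    exact ⟨r • x, by rw [TensorProduct.smul_tmul, Algebra.smul_def, mul_one]⟩

theorem alphaMap_tmul_one (x : KaehlerDifferential.ideal k A) :
    alphaMap k A J (x ⊗ₜ[A ⊗[k] A] (1 : (A ⧸ J) ⊗[k] (A ⧸ J))) =
      algebraMap (A ⊗[k] A) ((A ⧸ J) ⊗[k] (A ⧸ J)) x := by
  simp only [alphaMap, TensorProduct.lift.tmul, LinearMap.comp_apply, Submodule.subtype_apply,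
    LinearMap.lsmul_apply]
  exact (Algebra.algebraMap_eq_smul_one (x : A ⊗[k] A)).symm

theorem mul_algebraMap_aux (x : A ⊗[k] A) :
    LinearMap.mul' k (A ⧸ J) (algebraMap (A ⊗[k] A) ((A ⧸ J) ⊗[k] (A ⧸ J)) x) =
      Ideal.Quotient.mk J (Algebra.TensorProduct.lmul' (S := A) k x) := by
  rw [algebraMap_quotTensor]
  induction x with
  | zero => simp
  | add a b ha hb => simp only [map_add, ha, hb]
  | tmul a b => simp

theorem mem_right_aux {R : Type*} [CommRing R] (K I : Ideal R) {x : R} (h : x ∈ K * I) :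
    x ∈ I := (Ideal.mul_le_inf h).2

theorem beta_alpha_aux : Function.Exact (betaFun k A J) (alphaMap k A J) := by
  intro z
  constructor
  · intro hz
    obtain ⟨x, rfl⟩ := exists_tmul_one_aux k A J z
    rw [alphaMap_tmul_one, ← RingHom.mem_ker, ker_quotTensor] at hz
    obtain ⟨j, hj, j', hj', h⟩ := exists_rep_aux k A J x hz
    have h0 : j + j' = 0 := by
      have h1 := (mem_ideal_iff_aux k A _).1 (mem_right_aux _ _ h)
      have h2 := (mem_ideal_iff_aux k A _).1 x.2
      rw [map_sub, h2, zero_sub, neg_eq_zero, map_add] at h1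
      simpa only [Algebra.TensorProduct.lmul'_apply_tmul, mul_one, one_mul] using h1
    obtain rfl : j' = -j := (neg_eq_of_add_eq_zero_right h0).symm
    refine ⟨⟨j, hj⟩, ?_⟩
    rw [eq_comm, ← sub_eq_zero, betaFun, ← TensorProduct.sub_tmul, tmul_one_eq_zero_iff_mul]
    rw [TensorProduct.tmul_neg, ← sub_eq_add_neg] at h
    exact h
  · rintro ⟨j, rfl⟩
    rw [betaFun, alphaMap_tmul_one, algebraMap_quotTensor]
    simp [Ideal.Quotient.eq_zero_iff_mem.2 j.2]

theorem alpha_eps_aux :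
    Function.Exact (alphaMap k A J) (LinearMap.mul' k (A ⧸ J)) := by
  intro c
  constructor
  · intro hc
    obtain ⟨r, rfl⟩ := algebraMap_quotTensor_surj k A J c
    rw [mul_algebraMap_aux, Ideal.Quotient.eq_zero_iff_mem] at hc
    refine ⟨(⟨r - (Algebra.TensorProduct.lmul' (S := A) k r) ⊗ₜ 1,
      by simp⟩ : KaehlerDifferential.ideal k A) ⊗ₜ 1, ?_⟩
    rw [alphaMap_tmul_one, map_sub, sub_eq_self, algebraMap_quotTensor,
      Algebra.TensorProduct.map_tmul, Ideal.Quotient.mkₐ_eq_mk,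
      Ideal.Quotient.eq_zero_iff_mem.2 hc, TensorProduct.zero_tmul]
  · rintro ⟨z, rfl⟩
    obtain ⟨x, rfl⟩ := exists_tmul_one_aux k A J z
    rw [alphaMap_tmul_one, mul_algebraMap_aux, (mem_ideal_iff_aux k A _).1 x.2, map_zero]

/-- **Huybrechts–Thomas exactness lemma, affine-local form.**
Let `k` be a commutative ring, `A` a smooth commutative `k`-algebra, `J ⊆ A` an ideal with
`B := A ⧸ J` flat as a `k`-module, and `I ⊆ A ⊗ₖ A` the kernel of the multiplication map.
Then the sequence `0 → J/J² → I ⊗_{A ⊗ₖ A} (B ⊗ₖ B) → B ⊗ₖ B → B → 0` is exact, where the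
maps are `β : j ↦ (j ⊗ 1 - 1 ⊗ j) ⊗ 1`, `α : x ⊗ m ↦ x̄ · m` and the multiplication
`ε : b ⊗ b' ↦ b b'`.  (Exactness at `J/J²` is expressed by `β j = 0 ↔ j ∈ J²`, which
simultaneously says that `β` kills `J²` and that the induced map on `J/J²` is injective.) -/
theorem statement7 [Algebra.Smooth k A] [Module.Flat k (A ⧸ J)] :
    (∀ j : J, betaFun k A J j = 0 ↔ (j : A) ∈ J ^ 2) ∧
    Function.Exact (betaFun k A J) (alphaMap k A J) ∧
    Function.Exact (alphaMap k A J) (LinearMap.mul' k (A ⧸ J)) ∧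
    Function.Surjective (LinearMap.mul' k (A ⧸ J)) := by
  exact ⟨fun j => ⟨beta_inj_aux k A J j, beta_sq_aux k A J j⟩, beta_alpha_aux k A J,
    alpha_eps_aux k A J, fun b => ⟨b ⊗ₜ 1, by simp⟩⟩

end
end

section
/- Let J ⊆ A be an ideal and, for indices a, b ∈ {1,2,3}, let M_{ab} be m×m matrices over A such that every entry of M_{ab}·M_{bc} − M_{ac} and every entry of M_{ab}·M_{ba} − 1 lies in J, for all a, b, c ∈ {1,2,3}. Then every entry of the Ω_{A|k}-valued matrix −M_{13}·d(M_{32}·M_{21} − M_{31}) + M_{12}·M_{23}·d(M_{32})·M_{21} − M_{13}·d(M_{31}) + M_{12}·d(M_{21}) lies in J·Ω_{A|k}. -/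
/-- Entrywise application of the universal derivation `d : A → Ω_{A|k}` to a matrix. -/
noncomputable def matD (k : Type*) {A : Type*} [CommRing k] [CommRing A] [Algebra k A]
    {m n : ℕ} (M : Matrix (Fin m) (Fin n) A) :
    Matrix (Fin m) (Fin n) (KaehlerDifferential k A) :=
  M.map (KaehlerDifferential.D k A)

/-- Product of a matrix over `A` with a matrix over an `A`-module `V`, using the scalar
action of `A` on `V`. -/
def matLMul {A V : Type*} [CommRing A] [AddCommMonoid V] [Module A V]
    {m n p : ℕ} (M : Matrix (Fin m) (Fin n) A) (W : Matrix (Fin n) (Fin p) V) :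
    Matrix (Fin m) (Fin p) V :=
  fun u v => ∑ x : Fin n, M u x • W x v

/-- Product of a matrix over an `A`-module `V` with a matrix over `A`, using the scalar
action of `A` on `V`. -/
def matRMul {A V : Type*} [CommRing A] [AddCommMonoid V] [Module A V]
    {m n p : ℕ} (W : Matrix (Fin m) (Fin n) V) (M : Matrix (Fin n) (Fin p) A) :
    Matrix (Fin m) (Fin p) V :=
  fun u v => ∑ x : Fin n, M x v • W u x

section helpers
variable {A V : Type*} [CommRing A] [AddCommGroup V] [Module A V] {m n p q : ℕ}

theorem matLMul_add' (M : Matrix (Fin m) (Fin n) A) (W W' : Matrix (Fin n) (Fin p) V) :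
    matLMul M (W + W') = matLMul M W + matLMul M W' := by
  ext u v
  simp [matLMul, Finset.sum_add_distrib]

theorem matLMul_sub' (M : Matrix (Fin m) (Fin n) A) (W W' : Matrix (Fin n) (Fin p) V) :
    matLMul M (W - W') = matLMul M W - matLMul M W' := by
  ext u v
  simp [matLMul, smul_sub, Finset.sum_sub_distrib]

theorem sub_matLMul' (M M' : Matrix (Fin m) (Fin n) A) (W : Matrix (Fin n) (Fin p) V) :
    matLMul (M - M') W = matLMul M W - matLMul M' W := by
  ext u v
  simp [matLMul, sub_smul, Finset.sum_sub_distrib]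

theorem mul_matLMul' (M : Matrix (Fin m) (Fin n) A) (N : Matrix (Fin n) (Fin p) A)
    (W : Matrix (Fin p) (Fin q) V) :
    matLMul (M * N) W = matLMul M (matLMul N W) := by
  ext u v
  simp only [matLMul, Matrix.mul_apply, Finset.sum_smul, Finset.smul_sum, mul_smul]
  exact Finset.sum_comm

theorem matLMul_matRMul' (M : Matrix (Fin m) (Fin n) A) (W : Matrix (Fin n) (Fin p) V)
    (N : Matrix (Fin p) (Fin q) A) :
    matLMul M (matRMul W N) = matRMul (matLMul M W) N := by
  ext u v
  simp only [matLMul, matRMul, Finset.smul_sum]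
  rw [Finset.sum_comm]
  exact Finset.sum_congr rfl fun x _ => Finset.sum_congr rfl fun y _ => smul_comm _ _ _

theorem matLMul_mem' (J : Ideal A) (M : Matrix (Fin m) (Fin n) A) (W : Matrix (Fin n) (Fin p) V)
    (h : ∀ u v, M u v ∈ J) (u : Fin m) (v : Fin p) :
    matLMul M W u v ∈ J • (⊤ : Submodule A V) :=
  Submodule.sum_mem _ fun x _ => Submodule.smul_mem_smul (h u x) trivial

theorem matD_mul' (k : Type*) [CommRing k] [Algebra k A]
    (M : Matrix (Fin m) (Fin n) A) (N : Matrix (Fin n) (Fin p) A) :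
    matD k (M * N) = matLMul M (matD k N) + matRMul (matD k M) N := by
  ext u v
  simp [matD, matLMul, matRMul, Matrix.mul_apply, Finset.sum_add_distrib]

theorem matD_sub' (k : Type*) [CommRing k] [Algebra k A] (M N : Matrix (Fin m) (Fin n) A) :
    matD k (M - N) = matD k M - matD k N := by
  ext u v
  simp [matD]

end helpers

/-- Let `J ⊆ A` be an ideal and, for `a, b ∈ {1,2,3}` (here indexed by `Fin 3`), let `M a b`
be `m × m` matrices over `A` such that every entry of `M a b * M b c - M a c` and every entry
of `M a b * M b a - 1` lies in `J`.  Then every entry of the `Ω_{A|k}`-valued matrix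
`-M₁₃·d(M₃₂·M₂₁ - M₃₁) + M₁₂·M₂₃·d(M₃₂)·M₂₁ - M₁₃·d(M₃₁) + M₁₂·d(M₂₁)` lies in
`J · Ω_{A|k}` (with `(1,2,3) = (0,1,2)`). -/
theorem statement11 {k A : Type*} [CommRing k] [CommRing A] [Algebra k A]
    (J : Ideal A) {m : ℕ} (M : Fin 3 → Fin 3 → Matrix (Fin m) (Fin m) A)
    (h1 : ∀ a b c : Fin 3, ∀ u v : Fin m, (M a b * M b c - M a c) u v ∈ J)
    (h2 : ∀ a b : Fin 3, ∀ u v : Fin m, (M a b * M b a - 1) u v ∈ J) :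
    ∀ u v : Fin m,
      (-(matLMul (M 0 2) (matD k (M 2 1 * M 1 0 - M 2 0))) +
        matRMul (matLMul (M 0 1 * M 1 2) (matD k (M 2 1))) (M 1 0) -
        matLMul (M 0 2) (matD k (M 2 0)) +
        matLMul (M 0 1) (matD k (M 1 0))) u v ∈
      J • (⊤ : Submodule A (KaehlerDifferential k A)) := by
  intro u v
  have key : -(matLMul (M 0 2) (matD k (M 2 1 * M 1 0 - M 2 0))) +
        matRMul (matLMul (M 0 1 * M 1 2) (matD k (M 2 1))) (M 1 0) -
        matLMul (M 0 2) (matD k (M 2 0)) +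
        matLMul (M 0 1) (matD k (M 1 0)) =
      matLMul (M 0 1 * M 1 2 - M 0 2) (matRMul (matD k (M 2 1)) (M 1 0)) -
        matLMul (M 0 2 * M 2 1 - M 0 1) (matD k (M 1 0)) := by
    rw [matD_sub', matD_mul', ← matLMul_matRMul']
    simp only [matLMul_sub', matLMul_add', sub_matLMul', mul_matLMul']
    abel
  rw [key]
  exact Submodule.sub_mem _ (matLMul_mem' J _ _ (h1 0 1 2) u v)
    (matLMul_mem' J _ _ (h1 0 2 1) u v)
end

section
/- Let J ⊆ A be an ideal. For a, b ∈ {1,2,3}, let M_{ab} be m×m matrices, M'_{ab} be m'×m' matrices, and D_a be m'×m matrices over A. Assume that, entrywise modulo J, one has M_{ab}·M_{bc} ≡ M_{ac}, M'_{ab}·M'_{bc} ≡ M'_{ac}, M_{ab}·M_{ba} ≡ 1, M'_{ab}·M'_{ba} ≡ 1 for all a, b, c ∈ {1,2,3}, and M'_{ab}·D_b ≡ D_a·M_{ab} for all a, b ∈ {1,2,3}. Then every entry of D_1·M_{13}·(M_{32}·M_{21} − M_{31}) + M'_{12}·M'_{23}·(M'_{32}·D_2 − D_3·M_{32})·M_{21}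 − M'_{13}·(M'_{31}·D_1 − D_3·M_{31}) + M'_{12}·(M'_{21}·D_1 − D_2·M_{21}) − M'_{13}·(M'_{32}·M'_{21} − M'_{31})·D_1 lies in J². -/
/-- Let `J ⊆ A` be an ideal.  For `a, b ∈ {1,2,3}` (indexed by `Fin 3`, `(1,2,3) = (0,1,2)`),
let `M a b` be `m × m` matrices, `M' a b` be `m' × m'` matrices and `D a` be `m' × m` matrices
over `A`.  Assume that, entrywise modulo `J`, `M a b * M b c ≡ M a c`,
`M' a b * M' b c ≡ M' a c`, `M a b * M b a ≡ 1`, `M' a b * M' b a ≡ 1` and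
`M' a b * D b ≡ D a * M a b`.  Then every entry of
`D₁·M₁₃·(M₃₂·M₂₁ - M₃₁) + M'₁₂·M'₂₃·(M'₃₂·D₂ - D₃·M₃₂)·M₂₁ - M'₁₃·(M'₃₁·D₁ - D₃·M₃₁)
 + M'₁₂·(M'₂₁·D₁ - D₂·M₂₁) - M'₁₃·(M'₃₂·M'₂₁ - M'₃₁)·D₁` lies in `J ^ 2`. -/
theorem statement12 {A : Type*} [CommRing A] (J : Ideal A) {m m' : ℕ}
    (M : Fin 3 → Fin 3 → Matrix (Fin m) (Fin m) A)
    (M' : Fin 3 → Fin 3 → Matrix (Fin m') (Fin m') A)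
    (D : Fin 3 → Matrix (Fin m') (Fin m) A)
    (hM : ∀ a b c : Fin 3, ∀ u v : Fin m, (M a b * M b c - M a c) u v ∈ J)
    (hM' : ∀ a b c : Fin 3, ∀ u v : Fin m', (M' a b * M' b c - M' a c) u v ∈ J)
    (hM1 : ∀ a b : Fin 3, ∀ u v : Fin m, (M a b * M b a - 1) u v ∈ J)
    (hM'1 : ∀ a b : Fin 3, ∀ u v : Fin m', (M' a b * M' b a - 1) u v ∈ J)
    (hD : ∀ a b : Fin 3, ∀ u : Fin m', ∀ v : Fin m, (M' a b * D b - D a * M a b) u v ∈ J) :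
    ∀ u : Fin m', ∀ v : Fin m,
      (D 0 * M 0 2 * (M 2 1 * M 1 0 - M 2 0) +
        M' 0 1 * M' 1 2 * (M' 2 1 * D 1 - D 2 * M 2 1) * M 1 0 -
        M' 0 2 * (M' 2 0 * D 0 - D 2 * M 2 0) +
        M' 0 1 * (M' 1 0 * D 0 - D 1 * M 1 0) -
        M' 0 2 * (M' 2 1 * M' 1 0 - M' 2 0) * D 0) u v ∈ J ^ 2 := by
  have mulJ : ∀ {p q r : ℕ} (X : Matrix (Fin p) (Fin q) A) (Y : Matrix (Fin q) (Fin r) A),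
      (∀ i j, X i j ∈ J) → (∀ i j, Y i j ∈ J) → ∀ i j, (X * Y) i j ∈ J ^ 2 := by
    intro p q r X Y hX hY i j
    rw [Matrix.mul_apply, pow_two]
    exact Ideal.sum_mem _ fun k _ => Ideal.mul_mem_mul (hX i k) (hY k j)
  have mulR : ∀ {p q r : ℕ} (X : Matrix (Fin p) (Fin q) A) (Y : Matrix (Fin q) (Fin r) A),
      (∀ i j, X i j ∈ J ^ 2) → ∀ i j, (X * Y) i j ∈ J ^ 2 := by
    intro p q r X Y hX i j
    rw [Matrix.mul_apply]
    exact Ideal.sum_mem _ fun k _ => Ideal.mul_mem_right _ _ (hX i k)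
  intro u v
  have key : D 0 * M 0 2 * (M 2 1 * M 1 0 - M 2 0) +
        M' 0 1 * M' 1 2 * (M' 2 1 * D 1 - D 2 * M 2 1) * M 1 0 -
        M' 0 2 * (M' 2 0 * D 0 - D 2 * M 2 0) +
        M' 0 1 * (M' 1 0 * D 0 - D 1 * M 1 0) -
        M' 0 2 * (M' 2 1 * M' 1 0 - M' 2 0) * D 0 =
      (M' 0 1 * M' 1 2 - M' 0 2) * (M' 2 1 * D 1 - D 2 * M 2 1) * M 1 0
      - (M' 0 2 * D 2 - D 0 * M 0 2) * (M 2 1 * M 1 0 - M 2 0)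
      - (M' 0 2 * M' 2 1 - M' 0 1) * (M' 1 0 * D 0 - D 1 * M 1 0) := by
    simp only [Matrix.mul_sub, Matrix.sub_mul, Matrix.mul_assoc]
    abel
  rw [key, Matrix.sub_apply, Matrix.sub_apply]
  exact sub_mem (sub_mem
    (mulR _ _ (mulJ _ _ (hM' 0 1 2) (hD 2 1)) u v)
    (mulJ _ _ (hD 0 2) (hM 2 1 0) u v))
    (mulJ _ _ (hM' 0 2 1) (hD 1 0) u v)
end

section
/- Let J ⊆ A be an ideal. Let M_{21} be an m×m matrix, M'_{12}, M'_{21} be m'×m' matrices, M''_{12}, M''_{21} be m''×m'' matrices, D_1, D_2 be m'×m matrices, and D'_1, D'_2 be m''×m' matrices over A. Assume that every entry of M'_{21}·D_1 − D_2·M_{21}, of M''_{12}·D'_2 − D'_1·M'_{12}, of M''_{21}·D'_1 − D'_2·M'_{21}, of M''_{12}·M''_{21} − 1, of D'_1·D_1, and of D'_2·D_2 lies in J. Then every entry of −D'_1·M'_{12}·(M'_{21}·D_1 − D_2·M_{21}) − M''_{12}·D'_2·D_2·M_{21} + D'_1·D_1 − M''_{12}·(M''_{21}·D'_1 − D'_2·M'_{21})·D_1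 lies in J². -/
/-- Let `J ⊆ A` be an ideal.  Let `M₂₁` be an `m × m` matrix, `M'₁₂, M'₂₁` be `m' × m'`
matrices, `M''₁₂, M''₂₁` be `m'' × m''` matrices, `D₁, D₂` be `m' × m` matrices, and
`D'₁, D'₂` be `m'' × m'` matrices over `A`.  Assume that every entry of
`M'₂₁·D₁ - D₂·M₂₁`, of `M''₁₂·D'₂ - D'₁·M'₁₂`, of `M''₂₁·D'₁ - D'₂·M'₂₁`, of
`M''₁₂·M''₂₁ - 1`, of `D'₁·D₁` and of `D'₂·D₂` lies in `J`.  Then every entry of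
`-D'₁·M'₁₂·(M'₂₁·D₁ - D₂·M₂₁) - M''₁₂·D'₂·D₂·M₂₁ + D'₁·D₁ - M''₁₂·(M''₂₁·D'₁ - D'₂·M'₂₁)·D₁`
lies in `J ^ 2`. -/
theorem statement14 {A : Type*} [CommRing A] (J : Ideal A) {m m' m'' : ℕ}
    (M21 : Matrix (Fin m) (Fin m) A)
    (M'12 M'21 : Matrix (Fin m') (Fin m') A)
    (M''12 M''21 : Matrix (Fin m'') (Fin m'') A)
    (D1 D2 : Matrix (Fin m') (Fin m) A)
    (D'1 D'2 : Matrix (Fin m'') (Fin m') A)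
    (h1 : ∀ u : Fin m', ∀ v : Fin m, (M'21 * D1 - D2 * M21) u v ∈ J)
    (h2 : ∀ u : Fin m'', ∀ v : Fin m', (M''12 * D'2 - D'1 * M'12) u v ∈ J)
    (h3 : ∀ u : Fin m'', ∀ v : Fin m', (M''21 * D'1 - D'2 * M'21) u v ∈ J)
    (h4 : ∀ u v : Fin m'', (M''12 * M''21 - 1) u v ∈ J)
    (h5 : ∀ u : Fin m'', ∀ v : Fin m, (D'1 * D1) u v ∈ J)
    (h6 : ∀ u : Fin m'', ∀ v : Fin m, (D'2 * D2) u v ∈ J) :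
    ∀ u : Fin m'', ∀ v : Fin m,
      (-(D'1 * M'12 * (M'21 * D1 - D2 * M21)) -
        M''12 * D'2 * D2 * M21 +
        D'1 * D1 -
        M''12 * (M''21 * D'1 - D'2 * M'21) * D1) u v ∈ J ^ 2 := by
  have key : -(D'1 * M'12 * (M'21 * D1 - D2 * M21)) -
        M''12 * D'2 * D2 * M21 +
        D'1 * D1 -
        M''12 * (M''21 * D'1 - D'2 * M'21) * D1 =
      (M''12 * D'2 - D'1 * M'12) * (M'21 * D1 - D2 * M21) -
        (M''12 * M''21 - 1) * (D'1 * D1) := by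
    simp only [Matrix.mul_sub, Matrix.sub_mul, Matrix.mul_assoc, Matrix.one_mul]
    abel
  intro u v
  rw [key, Matrix.sub_apply, Matrix.mul_apply, Matrix.mul_apply, pow_two]
  exact sub_mem (sum_mem fun k _ => Ideal.mul_mem_mul (h2 u k) (h1 k v))
    (sum_mem fun k _ => Ideal.mul_mem_mul (h4 u k) (h5 k v))
end
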